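/- For every real p > 4 there exists a constant C_p > 0 such that for every t ≥ 0 and all x, y ∈ [0,1], ( ∫₀ᵗ ( ∫₀¹ (G_{t−r}(x,z) − G_{t−r}(y,z))² dz )^{p/(p−2)} dr )^{(p−2)/2} ≤ C_p |x−y|^{(p−4)/2}. -/

import Mathlib

/-!
Write `h = |x - y|`, `q = p / (p - 2) ∈ (1, 2)` and `I(s) = ∫₀¹ (G_s(x,z) - G_s(y,z))² dz`. By
orthogonality of the sines (`integral_sq_tsum_le`), `I(s)` is at most any bound for the partial sums
of `∑ 2 e^{-2π²n²s} (sin nπx - sin nπy)²`. Bounding the difference of sines by `2`, or by `nπh`, and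
comparing the Gaussian sums with Gaussian integrals gives `I(s) ≤ 4 s^{-1/2}`
(`integral_sq_le_short`) and `I(s) ≤ 4 h² s^{-3/2}` (`integral_sq_le_long`).

Using the first bound for `s ≤ h²` and the second for `s > h²`, `∫₀^∞ I(s)^q ds` is at most a
constant times `h^{2-q}` (`integral_majorant`): the singularity at `0` is integrable because `q < 2`,
the tail because `3q/2 > 1`. Raising to the power `(p-2)/2` turns `h^{2-q}` into `h^{(p-4)/2}`.
-/

open Real MeasureTheory Set

/-- The Dirichlet heat kernel on `[0,1]`:
`G t x y = ∑_{n=1}^∞ 2 e^{−π²n²t} sin(nπx) sin(nπy)` for `t > 0`, and `0` for `t ≤ 0`. -/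
noncomputable def G (t x y : ℝ) : ℝ :=
  if 0 < t then
    ∑' n : ℕ, 2 * Real.exp (-(Real.pi ^ 2) * ((n : ℝ) + 1) ^ 2 * t)
      * Real.sin (((n : ℝ) + 1) * Real.pi * x) * Real.sin (((n : ℝ) + 1) * Real.pi * y)
  else 0

/-- Comparison of the sum with the Gaussian integral over `(0, ∞)`. -/
lemma sum_gauss_le {a : ℝ} (ha : 0 < a) (N : ℕ) :
    ∑ n ∈ Finset.range N, Real.exp (-a * ((n : ℝ) + 1) ^ 2) ≤ √(π / a) / 2 := by
  have hanti : AntitoneOn (fun u : ℝ => Real.exp (-a * u ^ 2)) (Icc (0:ℝ) (0 + (N:ℕ))) := by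
    intro u hu v _ huv
    have : u ^ 2 ≤ v ^ 2 := by
      have := hu.1
      gcongr
    apply Real.exp_le_exp.2
    nlinarith
  have h1 := hanti.sum_le_integral
  have h2 : ∫ u in (0:ℝ)..(0 + (N:ℕ)), Real.exp (-a * u ^ 2)
      ≤ ∫ u in Ioi (0:ℝ), Real.exp (-a * u ^ 2) := by
    rw [intervalIntegral.integral_of_le (by simp)]
    exact setIntegral_mono_set (integrable_exp_neg_mul_sq ha).integrableOn
      (Filter.Eventually.of_forall fun u => (Real.exp_pos _).le)
      (Filter.Eventually.of_forall Ioc_subset_Ioi_self)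
  rw [integral_gaussian_Ioi] at h2
  simpa using h1.trans h2

lemma integral_sin_mul_sin (m n : ℕ) :
    ∫ z in Icc (0:ℝ) 1, Real.sin (((m : ℝ) + 1) * π * z) * Real.sin (((n : ℝ) + 1) * π * z)
      = if m = n then 1 / 2 else 0 := by
  rw [integral_Icc_eq_integral_Ioc, ← intervalIntegral.integral_of_le zero_le_one]
  have hcos : ∀ k : ℤ, ∫ z in (0:ℝ)..1, Real.cos ((k : ℝ) * π * z) = if k = 0 then 1 else 0 := by
    intro k
    split_ifs with hk
    · simp [hk]
    · have hk' : (k : ℝ) * π ≠ 0 := mul_ne_zero (by exact_mod_cast hk) pi_ne_zero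
      rw [intervalIntegral.integral_comp_mul_left (fun u => Real.cos u) hk']
      simp [Real.sin_int_mul_pi]
  have hi : ∀ k : ℤ, IntervalIntegrable (fun z : ℝ => Real.cos ((k : ℝ) * π * z)) volume 0 1 :=
    fun k => (by fun_prop : Continuous fun z : ℝ => Real.cos ((k : ℝ) * π * z)).intervalIntegrable _ _
  have he : ∀ z : ℝ, Real.sin (((m : ℝ) + 1) * π * z) * Real.sin (((n : ℝ) + 1) * π * z)
      = 1 / 2 * (Real.cos ((((m : ℤ) - n : ℤ) : ℝ) * π * z)
          - Real.cos ((((m : ℤ) + n + 2 : ℤ) : ℝ) * π * z)) := by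
    intro z
    push_cast
    rw [show ((m:ℝ) - n) * π * z = (m + 1) * π * z - (n + 1) * π * z by ring,
      show ((m:ℝ) + n + 2) * π * z = (m + 1) * π * z + (n + 1) * π * z by ring,
      Real.cos_sub, Real.cos_add]
    ring
  simp_rw [he]
  rw [intervalIntegral.integral_const_mul, intervalIntegral.integral_sub (hi _) (hi _), hcos, hcos,
    if_neg (by omega : ¬ ((m:ℤ) + n + 2 = 0))]
  by_cases h : m = n
  · simp [h]
  · rw [if_neg (by omega), if_neg h]; simp

/-- Bessel-type bound for absolutely convergent sine series: orthogonality for the partial sums,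
then dominated convergence. -/
lemma integral_sq_tsum_le {c : ℕ → ℝ} (hc : Summable fun n => |c n|) {B : ℝ}
    (hB : ∀ N, ∑ n ∈ Finset.range N, c n ^ 2 / 2 ≤ B) :
    ∫ z in Icc (0:ℝ) 1, (∑' n : ℕ, c n * Real.sin (((n : ℝ) + 1) * π * z)) ^ 2 ≤ B := by
  have hle : ∀ z n, |c n * Real.sin (((n : ℝ) + 1) * π * z)| ≤ |c n| := fun z n => by
    rw [abs_mul]
    exact mul_le_of_le_one_right (abs_nonneg _) (Real.abs_sin_le_one _)
  have hs : ∀ z : ℝ, Summable fun n : ℕ => c n * Real.sin (((n : ℝ) + 1) * π * z) := fun z =>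
    Summable.of_norm_bounded hc (hle z)
  have hlim := tendsto_integral_of_dominated_convergence (μ := volume.restrict (Icc (0:ℝ) 1))
    (F := fun N z => (∑ n ∈ Finset.range N, c n * Real.sin (((n : ℝ) + 1) * π * z)) ^ 2)
    (f := fun z => (∑' n : ℕ, c n * Real.sin (((n : ℝ) + 1) * π * z)) ^ 2)
    (fun _ => (∑' n, |c n|) ^ 2)
    (fun N => (by fun_prop : Continuous _).aestronglyMeasurable)
    (integrable_const _)
    (fun N => Filter.Eventually.of_forall fun z => by
      rw [norm_pow]
      gcongr
      exact (Finset.abs_sum_le_sum_abs _ _).trans ((Finset.sum_le_sum fun n _ => hle z n).trans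
        (hc.sum_le_tsum _ fun _ _ => abs_nonneg _)))
    (Filter.Eventually.of_forall fun z => ((hs z).hasSum.tendsto_sum_nat).pow 2)
  refine le_of_tendsto' hlim fun N => ?_
  refine le_of_eq_of_le ?_ (hB N)
  have hint : ∀ m n : ℕ, Integrable (fun z : ℝ =>
      c m * c n * (Real.sin (((m : ℝ) + 1) * π * z) * Real.sin (((n : ℝ) + 1) * π * z)))
      (volume.restrict (Icc (0:ℝ) 1)) := fun m n =>
    (by fun_prop : Continuous fun z : ℝ =>
      c m * c n * (Real.sin (((m : ℝ) + 1) * π * z) * Real.sin (((n : ℝ) + 1) * π * z))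
      ).continuousOn.integrableOn_Icc
  have he : ∀ z : ℝ, (∑ n ∈ Finset.range N, c n * Real.sin (((n : ℝ) + 1) * π * z)) ^ 2
      = ∑ m ∈ Finset.range N, ∑ n ∈ Finset.range N,
        c m * c n * (Real.sin (((m : ℝ) + 1) * π * z) * Real.sin (((n : ℝ) + 1) * π * z)) := by
    intro z
    rw [sq, Finset.sum_mul_sum]
    refine Finset.sum_congr rfl fun m _ => Finset.sum_congr rfl fun n _ => by ring
  simp_rw [he]
  rw [integral_finsetSum _ fun m _ => integrable_finsetSum _ fun n _ => hint m n]
  refine Finset.sum_congr rfl fun m hm => ?_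
  rw [integral_finsetSum _ fun n _ => hint m n]
  simp_rw [integral_const_mul, integral_sin_mul_sin]
  simp [Finset.mem_range.1 hm]
  ring

/-- The `n`-th sine coefficient of `z ↦ G s x z - G s y z`, the frequency being `n + 1`. -/
noncomputable def diffCoeff (s x y : ℝ) (n : ℕ) : ℝ :=
  2 * Real.exp (-(π ^ 2 * s) * ((n : ℝ) + 1) ^ 2)
    * (Real.sin (((n : ℝ) + 1) * π * x) - Real.sin (((n : ℝ) + 1) * π * y))

lemma summable_gauss {a : ℝ} (ha : 0 < a) :
    Summable fun n : ℕ => Real.exp (-a * ((n : ℝ) + 1) ^ 2) :=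
  summable_of_sum_range_le (fun _ => (Real.exp_pos _).le) (sum_gauss_le ha)

lemma abs_sin_sub_sin_le_two (u v : ℝ) : |Real.sin u - Real.sin v| ≤ 2 := by
  rw [abs_le]
  constructor <;>
    linarith [Real.neg_one_le_sin u, Real.sin_le_one u, Real.neg_one_le_sin v, Real.sin_le_one v]

lemma summable_abs_diffCoeff {s : ℝ} (hs : 0 < s) (x y : ℝ) :
    Summable fun n => |diffCoeff s x y n| := by
  refine Summable.of_nonneg_of_le (fun _ => abs_nonneg _) (fun n => ?_)
    ((summable_gauss (a := π ^ 2 * s) (by positivity)).mul_left 4)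
  have h := abs_sin_sub_sin_le_two (((n : ℝ) + 1) * π * x) (((n : ℝ) + 1) * π * y)
  have he := Real.exp_pos (-(π ^ 2 * s) * ((n : ℝ) + 1) ^ 2)
  rw [diffCoeff, abs_mul, abs_of_pos (by positivity)]
  nlinarith

lemma G_sub_eq_tsum {s : ℝ} (hs : 0 < s) (x y z : ℝ) :
    G s x z - G s y z = ∑' n : ℕ, diffCoeff s x y n * Real.sin (((n : ℝ) + 1) * π * z) := by
  have hsum : ∀ w : ℝ, Summable fun n : ℕ => 2 * Real.exp (-(π ^ 2) * ((n : ℝ) + 1) ^ 2 * s)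
      * Real.sin (((n : ℝ) + 1) * π * w) * Real.sin (((n : ℝ) + 1) * π * z) := by
    intro w
    refine Summable.of_norm_bounded
      ((summable_gauss (a := π ^ 2 * s) (by positivity)).mul_left 2) (fun n => ?_)
    rw [show -(π ^ 2) * ((n : ℝ) + 1) ^ 2 * s = -(π ^ 2 * s) * ((n : ℝ) + 1) ^ 2 by ring,
      norm_mul, norm_mul, Real.norm_of_nonneg (by positivity : (0:ℝ) ≤ 2 * Real.exp _)]
    exact (mul_le_of_le_one_right (by positivity) (Real.abs_sin_le_one _)).trans
      (mul_le_of_le_one_right (by positivity) (Real.abs_sin_le_one _))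
  rw [G, G, if_pos hs, if_pos hs, ← (hsum x).tsum_sub (hsum y)]
  refine tsum_congr fun n => ?_
  rw [diffCoeff, show -(π ^ 2 * s) * ((n : ℝ) + 1) ^ 2 = -(π ^ 2) * ((n : ℝ) + 1) ^ 2 * s by ring]
  ring

lemma diffCoeff_sq (s x y : ℝ) (n : ℕ) :
    diffCoeff s x y n ^ 2 / 2 = 2 * Real.exp (-(2 * π ^ 2 * s) * ((n : ℝ) + 1) ^ 2)
      * |Real.sin (((n : ℝ) + 1) * π * x) - Real.sin (((n : ℝ) + 1) * π * y)| ^ 2 := by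
  rw [diffCoeff, sq_abs, show -(2 * π ^ 2 * s) * ((n : ℝ) + 1) ^ 2
    = -(π ^ 2 * s) * ((n : ℝ) + 1) ^ 2 + -(π ^ 2 * s) * ((n : ℝ) + 1) ^ 2 by ring, Real.exp_add]
  ring

/-- Short-time bound, from `|sin a - sin b| ≤ 2`. -/
lemma integral_sq_le_short {s : ℝ} (hs : 0 < s) (x y : ℝ) :
    ∫ z in Icc (0:ℝ) 1, (G s x z - G s y z) ^ 2 ≤ 4 * s ^ (-(1 / 2) : ℝ) := by
  simp_rw [G_sub_eq_tsum hs]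
  refine integral_sq_tsum_le (summable_abs_diffCoeff hs x y) fun N => ?_
  calc ∑ n ∈ Finset.range N, diffCoeff s x y n ^ 2 / 2
      ≤ ∑ n ∈ Finset.range N, 8 * Real.exp (-(2 * π ^ 2 * s) * ((n : ℝ) + 1) ^ 2) := by
        refine Finset.sum_le_sum fun n _ => ?_
        have h := abs_sin_sub_sin_le_two (((n : ℝ) + 1) * π * x) (((n : ℝ) + 1) * π * y)
        have h2 := pow_le_pow_left₀ (abs_nonneg _) h 2
        have he := Real.exp_pos (-(2 * π ^ 2 * s) * ((n : ℝ) + 1) ^ 2)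
        rw [diffCoeff_sq]
        nlinarith
    _ ≤ 8 * (√(π / (2 * π ^ 2 * s)) / 2) := by
        rw [← Finset.mul_sum]
        gcongr
        exact sum_gauss_le (by positivity) N
    _ ≤ 8 * (√(1 / s) / 2) := by
        gcongr 8 * (√?_ / 2)
        rw [div_le_div_iff₀ (by positivity) hs]
        nlinarith [Real.pi_gt_three, mul_pos Real.pi_pos hs]
    _ = 4 * s ^ (-(1 / 2) : ℝ) := by
        rw [Real.rpow_neg hs.le, ← Real.sqrt_eq_rpow, Real.sqrt_div zero_le_one, Real.sqrt_one]
        ring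

/-- Long-time bound: the Lipschitz estimate for `sin` gains a factor `n² |x - y|²`, and the `n²` is
absorbed by half of the Gaussian weight at the price of a factor `1 / s`. -/
lemma integral_sq_le_long {s : ℝ} (hs : 0 < s) (x y : ℝ) :
    ∫ z in Icc (0:ℝ) 1, (G s x z - G s y z) ^ 2 ≤ 4 * (|x - y| ^ 2 * s ^ (-(3 / 2) : ℝ)) := by
  simp_rw [G_sub_eq_tsum hs]
  refine integral_sq_tsum_le (summable_abs_diffCoeff hs x y) fun N => ?_
  calc ∑ n ∈ Finset.range N, diffCoeff s x y n ^ 2 / 2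
      ≤ ∑ n ∈ Finset.range N,
          2 * |x - y| ^ 2 / s * Real.exp (-(π ^ 2 * s) * ((n : ℝ) + 1) ^ 2) := by
        refine Finset.sum_le_sum fun n _ => ?_
        have h := Real.abs_sin_sub_sin_le (((n : ℝ) + 1) * π * x) (((n : ℝ) + 1) * π * y)
        rw [← mul_sub, abs_mul, abs_of_pos (by positivity : 0 < ((n : ℝ) + 1) * π)] at h
        have h2 := pow_le_pow_left₀ (abs_nonneg _) h 2
        set v := π ^ 2 * s * ((n : ℝ) + 1) ^ 2 with hv
        have hve : v * Real.exp (-v) ≤ 1 := by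
          rw [Real.exp_neg, ← div_eq_mul_inv, div_le_one (Real.exp_pos _)]
          linarith [Real.add_one_le_exp v]
        rw [diffCoeff_sq, show -(2 * π ^ 2 * s) * ((n : ℝ) + 1) ^ 2 = -v + -v by rw [hv]; ring,
          show -(π ^ 2 * s) * ((n : ℝ) + 1) ^ 2 = -v by rw [hv]; ring, Real.exp_add]
        calc _ ≤ 2 * (Real.exp (-v) * Real.exp (-v)) * (((n : ℝ) + 1) * π * |x - y|) ^ 2 := by
              gcongr
          _ = 2 * |x - y| ^ 2 / s * Real.exp (-v) * (v * Real.exp (-v)) := by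
              rw [hv]; field_simp
          _ ≤ _ := mul_le_of_le_one_right (by positivity) hve
    _ ≤ 2 * |x - y| ^ 2 / s * (√(π / (π ^ 2 * s)) / 2) := by
        rw [← Finset.mul_sum]
        gcongr
        exact sum_gauss_le (by positivity) N
    _ ≤ 2 * |x - y| ^ 2 / s * (√(1 / s) / 2) := by
        gcongr 2 * |x - y| ^ 2 / s * (√?_ / 2)
        rw [div_le_div_iff₀ (by positivity) hs]
        nlinarith [Real.pi_gt_three, mul_pos Real.pi_pos hs]
    _ = |x - y| ^ 2 * s ^ (-(3 / 2) : ℝ) := by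
        rw [show (-(3 / 2) : ℝ) = -1 + -(1 / 2) by norm_num, Real.rpow_add hs, Real.rpow_neg_one,
          Real.rpow_neg hs.le, ← Real.sqrt_eq_rpow, Real.sqrt_div zero_le_one, Real.sqrt_one]
        ring
    _ ≤ 4 * (|x - y| ^ 2 * s ^ (-(3 / 2) : ℝ)) := by
        have : 0 ≤ |x - y| ^ 2 * s ^ (-(3 / 2) : ℝ) := by positivity
        linarith

/-- The scale-invariant time profile dominating the `q`-th power of `∫₀¹ (G s x z - G s y z)² dz`
(up to the factor `4 ^ q`), where `h = |x - y|`; the two regimes meet at the parabolic scale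
`s = h²`. It vanishes for `s ≤ 0`. -/
noncomputable def majorant (q h s : ℝ) : ℝ :=
  (Ioc 0 (h ^ 2)).indicator (fun s => s ^ (-(q / 2))) s
    + (Ioi (h ^ 2)).indicator (fun s => h ^ (2 * q) * s ^ (-(3 * q / 2))) s

lemma majorant_nonneg {q h : ℝ} (hh : 0 < h) (s : ℝ) : 0 ≤ majorant q h s := by
  refine add_nonneg (indicator_nonneg (fun s hs => ?_) s) (indicator_nonneg (fun s hs => ?_) s)
  · exact Real.rpow_nonneg hs.1.le _
  · have : 0 ≤ s := (sq_nonneg h).trans (le_of_lt hs)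
    positivity

/-- Both pieces scale like `h ^ (2 - q)`; `q < 2` gives integrability at `0` and `q > 1` (in fact
`q > 2 / 3`) integrability at infinity. -/
lemma integral_majorant {q h : ℝ} (hq : 1 < q) (hq2 : q < 2) (hh : 0 < h) :
    Integrable (majorant q h) ∧
      ∫ s, majorant q h s = (1 / (1 - q / 2) + 1 / (3 * q / 2 - 1)) * h ^ (2 - q) := by
  have hh2 : 0 < h ^ 2 := by positivity
  have hi1 : IntegrableOn (fun s : ℝ => s ^ (-(q / 2))) (Ioc 0 (h ^ 2)) :=
    (intervalIntegrable_iff_integrableOn_Ioc_of_le hh2.le).1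
      (intervalIntegral.intervalIntegrable_rpow' (by linarith))
  have hi2 : IntegrableOn (fun s : ℝ => h ^ (2 * q) * s ^ (-(3 * q / 2))) (Ioi (h ^ 2)) :=
    (integrableOn_Ioi_rpow_of_lt (by linarith) hh2).const_mul _
  have hi1' := hi1.integrable_indicator measurableSet_Ioc
  have hi2' := hi2.integrable_indicator measurableSet_Ioi
  refine ⟨hi1'.add hi2', ?_⟩
  have hpow : ∀ a : ℝ, (h ^ 2) ^ a = h ^ (2 * a) := fun a => by
    rw [Real.rpow_mul hh.le, Real.rpow_two]
  unfold majorant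
  rw [integral_add hi1' hi2', integral_indicator measurableSet_Ioc,
    integral_indicator measurableSet_Ioi, ← intervalIntegral.integral_of_le hh2.le,
    integral_rpow (Or.inl (by linarith)), integral_const_mul,
    integral_Ioi_rpow_of_lt (by linarith) hh2, Real.zero_rpow (by linarith), hpow, hpow,
    show 2 * (-(q / 2) + 1) = 2 - q by ring,
    mul_div_assoc', mul_neg, ← Real.rpow_add hh,
    show 2 * q + 2 * (-(3 * q / 2) + 1) = 2 - q by ring]
  have h1 : 1 - q / 2 ≠ 0 := by linarith
  have h2 : 3 * q / 2 - 1 ≠ 0 := by linarith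
  rw [show -(q / 2) + 1 = 1 - q / 2 by ring, show -(3 * q / 2) + 1 = -(3 * q / 2 - 1) by ring,
    neg_div_neg_eq]
  ring

lemma integral_sq_rpow_le_majorant {q : ℝ} (hq : 0 < q) {x y : ℝ} (hxy : x ≠ y) (s : ℝ) :
    (∫ z in Icc (0:ℝ) 1, (G s x z - G s y z) ^ 2) ^ q ≤ 4 ^ q * majorant q |x - y| s := by
  have hh : 0 < |x - y| := abs_pos.2 (sub_ne_zero.2 hxy)
  have h0 : 0 ≤ ∫ z in Icc (0:ℝ) 1, (G s x z - G s y z) ^ 2 :=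
    integral_nonneg fun _ => sq_nonneg _
  rcases le_or_gt s 0 with hs | hs
  · have : ∫ z in Icc (0:ℝ) 1, (G s x z - G s y z) ^ 2 = 0 := by simp [G, hs.not_gt]
    rw [this, Real.zero_rpow hq.ne']
    exact mul_nonneg (by positivity) (majorant_nonneg hh s)
  rcases le_or_gt s (|x - y| ^ 2) with hsh | hsh
  · have hm : majorant q |x - y| s = s ^ (-(q / 2)) := by
      rw [majorant, indicator_of_mem (show s ∈ Ioc 0 (|x - y| ^ 2) from ⟨hs, hsh⟩),
        indicator_of_notMem (show s ∉ Ioi (|x - y| ^ 2) from not_lt.2 hsh), add_zero]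
    rw [hm]
    refine (Real.rpow_le_rpow h0 (integral_sq_le_short hs x y) hq.le).trans_eq ?_
    rw [Real.mul_rpow (by norm_num) (by positivity), ← Real.rpow_mul hs.le]
    congr 2; ring
  · have hm : majorant q |x - y| s = |x - y| ^ (2 * q) * s ^ (-(3 * q / 2)) := by
      rw [majorant, indicator_of_notMem (show s ∉ Ioc 0 (|x - y| ^ 2) from fun h => hsh.not_ge h.2),
        indicator_of_mem (show s ∈ Ioi (|x - y| ^ 2) from hsh), zero_add]
    rw [hm]
    refine (Real.rpow_le_rpow h0 (integral_sq_le_long hs x y) hq.le).trans_eq ?_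
    rw [Real.mul_rpow (by norm_num) (by positivity), Real.mul_rpow (by positivity) (by positivity),
      ← Real.rpow_mul hs.le, Real.rpow_mul hh.le, Real.rpow_two]
    congr 3; ring

/-- For every `p > 4` there is `C_p > 0` such that for all `t ≥ 0` and `x, y ∈ [0,1]`,
`(∫₀ᵗ (∫₀¹ (G_{t−r}(x,z) − G_{t−r}(y,z))² dz)^{p/(p−2)} dr)^{(p−2)/2} ≤ C_p |x−y|^{(p−4)/2}`. -/
theorem kernel_Lp_space_modulus (p : ℝ) (hp : 4 < p) :
    ∃ C : ℝ, 0 < C ∧ ∀ t x y : ℝ, 0 ≤ t →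
      x ∈ Set.Icc (0 : ℝ) 1 → y ∈ Set.Icc (0 : ℝ) 1 →
      (∫ r in Set.Icc (0 : ℝ) t,
          (∫ z in Set.Icc (0 : ℝ) 1, (G (t - r) x z - G (t - r) y z) ^ 2) ^ (p / (p - 2)))
            ^ ((p - 2) / 2)
        ≤ C * |x - y| ^ ((p - 4) / 2) := by
  have hp2 : 0 < p - 2 := by linarith
  have hq : 1 < p / (p - 2) := by rw [lt_div_iff₀ hp2]; linarith
  have hq2 : p / (p - 2) < 2 := by rw [div_lt_iff₀ hp2]; linarith
  have hexp : (2 - p / (p - 2)) * ((p - 2) / 2) = (p - 4) / 2 := by field_simp; ring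
  generalize p / (p - 2) = q at hq hq2 hexp ⊢
  have hD : 0 < 1 / (1 - q / 2) + 1 / (3 * q / 2 - 1) :=
    add_pos (one_div_pos.2 (by linarith)) (one_div_pos.2 (by linarith))
  set D := 1 / (1 - q / 2) + 1 / (3 * q / 2 - 1) with hDdef
  refine ⟨(4 ^ q * D) ^ ((p - 2) / 2), by positivity, fun t x y _ _ _ => ?_⟩
  rcases eq_or_ne x y with rfl | hxy
  · have h1 : (p - 2) / 2 ≠ 0 := by linarith
    have h2 : q ≠ 0 := by linarith
    simp only [sub_self, ne_eq, OfNat.ofNat_ne_zero, not_false_eq_true, zero_pow, integral_zero,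
      Real.zero_rpow h2, Real.zero_rpow h1]
    positivity
  have hh : 0 < |x - y| := abs_pos.2 (sub_ne_zero.2 hxy)
  obtain ⟨hmi, hmv⟩ := integral_majorant hq hq2 hh
  have hgi : Integrable fun r => 4 ^ q * majorant q |x - y| (t - r) :=
    (hmi.comp_sub_left t).const_mul _
  have hg0 : ∀ r, 0 ≤ 4 ^ q * majorant q |x - y| (t - r) := fun r =>
    mul_nonneg (by positivity) (majorant_nonneg hh _)
  have hF0 : ∀ r, 0 ≤ (∫ z in Icc (0:ℝ) 1, (G (t - r) x z - G (t - r) y z) ^ 2) ^ q := fun r =>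
    Real.rpow_nonneg (integral_nonneg fun _ => sq_nonneg _) _
  have key : ∫ r in Icc (0:ℝ) t, (∫ z in Icc (0:ℝ) 1, (G (t - r) x z - G (t - r) y z) ^ 2) ^ q
      ≤ 4 ^ q * D * |x - y| ^ (2 - q) :=
    -- Only the majorant has to be integrable: a non-integrable left side would be `0`.
    calc _ ≤ ∫ r in Icc (0:ℝ) t, 4 ^ q * majorant q |x - y| (t - r) :=
          integral_mono_of_nonneg (Filter.Eventually.of_forall hF0) hgi.integrableOn
            (Filter.Eventually.of_forall fun r =>
              integral_sq_rpow_le_majorant (by linarith) hxy (t - r))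
      _ ≤ ∫ r, 4 ^ q * majorant q |x - y| (t - r) :=
          setIntegral_le_integral hgi (Filter.Eventually.of_forall hg0)
      _ = 4 ^ q * D * |x - y| ^ (2 - q) := by
          rw [integral_const_mul, integral_sub_left_eq_self (majorant q |x - y|), hmv, mul_assoc]
  calc _ ≤ (4 ^ q * D * |x - y| ^ (2 - q)) ^ ((p - 2) / 2) :=
        Real.rpow_le_rpow (integral_nonneg hF0) key (by linarith)
    _ = (4 ^ q * D) ^ ((p - 2) / 2) * |x - y| ^ ((p - 4) / 2) := by
        rw [Real.mul_rpow (by positivity) (by positivity), ← Real.rpow_mul hh.le, hexp]
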